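/- There exists an absolute constant c > 0 with the following property. Let b_1, ..., b_k be distinct integers, a ∈ ℕ, s ∈ ℕ, x ≥ 3 real, (log x)^{−9/10} ≤ η ≤ 1, and |b_i| ≤ log x for all 1 ≤ i ≤ k. Set f(b) = (b − b_1)···(b − b_k). If 2 ≤ k < log log x and s > k, then Σ_{|b| ≤ η log x, b ≠ b_1, ..., b_k} (a^{k+1}|f(b)| / φ(a^{k+1}|f(b)|))^s ≤ (c · (a/φ(a)) · log s)^s · η·log x, where b runs over integers. -/

import Mathlib

/-!
Write `l = log L` with `L = log x`, and split the prime divisors of `|f(m)|` at `s ^ 8` and `l ^ 2`.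
Primes up to `s ^ 8` contribute `O(log s)` to `n / φ(n)` by Mertens' theorem. Since
`|f(m)| ≤ (2 * L) ^ k` with `k ≤ l`, there are at most `4 * l ^ 2` prime divisors in all, so those
above `l ^ 2` contribute `O(1)`.

The primes in between are treated on average over `m`. Each of their Euler factors, raised to the
power `s`, is at most `1 + 4 * s / p`. Expanding the product of these bounds into a sum over sets
`D` of primes, one has to count the `m` in an interval of length at most `2 * N`, `N = η * L`, for
which every `p ∈ D` divides `f(m)`: they lie in `k ^ #D` residue classes modulo `∏ p ∈ D, p`, so
there are at most `k ^ #D * (2 * N / ∏ p ∈ D, p + 1)` of them. The first term sums to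
`O(N)` as `∑ p > s ^ 8, k * s / p ^ 2` is bounded, the second to at most
`exp (4 * s ^ 2 * ∑ p, 1 / p)`. The middle range is empty unless `s ≤ l ^ (1 / 4)`, hence
`s ^ 2 * ∑ p, 1 / p = o(l)`, and the second term is absorbed by `N ≥ L ^ δ = exp (δ * l)`.
-/

open Finset Real

lemma prod_primesLE_pow_div_dvd_factorial (n : ℕ) :
    ∏ p ∈ n.primesLE, p ^ (n / p) ∣ n.factorial := by
  refine Finset.prod_dvd_of_isRelPrime (fun p hp q hq hpq ↦ ?_) fun p hp ↦ ?_
  · exact Nat.coprime_iff_isRelPrime.1 <| Nat.Coprime.pow _ _ <|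
      (Nat.coprime_primes (Nat.prime_of_mem_primesLE hp) (Nat.prime_of_mem_primesLE hq)).2 hpq
  · have hprime := Nat.prime_of_mem_primesLE hp
    have hmem : 1 ∈ Ico 1 (Nat.log p n).succ := by
      simpa using ⟨(Nat.mem_primesLE.1 hp).1, hprime.one_lt⟩
    refine (hprime.pow_dvd_factorial_iff (Nat.lt_succ_self _)).2 ?_
    simpa using single_le_sum (f := fun i ↦ n / p ^ i) (fun _ _ ↦ Nat.zero_le _) hmem

lemma sum_primesLE_div_mul_log_le (n : ℕ) :
    ∑ p ∈ n.primesLE, ((n / p : ℕ) : ℝ) * log p ≤ n * log n := by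
  have hpos : ∀ p ∈ n.primesLE, (p : ℝ) ^ (n / p) ≠ 0 := fun p hp ↦
    pow_ne_zero _ (mod_cast (Nat.prime_of_mem_primesLE hp).ne_zero)
  have hle : ∏ p ∈ n.primesLE, p ^ (n / p) ≤ n ^ n :=
    (Nat.le_of_dvd n.factorial_pos (prod_primesLE_pow_div_dvd_factorial n)).trans
      n.factorial_le_pow
  calc ∑ p ∈ n.primesLE, ((n / p : ℕ) : ℝ) * log p
      = log (∏ p ∈ n.primesLE, (p : ℝ) ^ (n / p)) := by
        simp only [log_prod hpos, log_pow]
    _ ≤ log ((n : ℝ) ^ n) :=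
        log_le_log ((prod_nonneg fun p _ ↦ by positivity).lt_of_ne' (prod_ne_zero_iff.2 hpos))
          (mod_cast hle)
    _ = n * log n := log_pow _ _

lemma sum_primesLE_log_div_le (n : ℕ) :
    ∑ p ∈ n.primesLE, log p / p ≤ log n + log 4 := by
  rcases n.eq_zero_or_pos with rfl | hn
  · simpa using log_nonneg (by norm_num : (1 : ℝ) ≤ 4)
  have hfloor : ∀ p : ℕ, (n : ℝ) / p - 1 ≤ (n / p : ℕ) := fun p ↦ by
    have := Nat.lt_floor_add_one ((n : ℝ) / p)
    rw [Nat.floor_div_eq_div] at this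
    linarith
  have htheta : ∑ p ∈ n.primesLE, log p ≤ log 4 * n := by
    rw [← Chebyshev.theta_eq_sum_primesLE_log]
    exact Chebyshev.theta_le_log4_mul_x n.cast_nonneg
  refine le_of_mul_le_mul_left ?_ (Nat.cast_pos.2 hn : (0 : ℝ) < n)
  calc n * ∑ p ∈ n.primesLE, log p / p
      = ∑ p ∈ n.primesLE, ((n : ℝ) / p - 1) * log p + ∑ p ∈ n.primesLE, log p := by
        rw [mul_sum, ← sum_add_distrib]
        exact sum_congr rfl fun p _ ↦ by ring
    _ ≤ ∑ p ∈ n.primesLE, ((n / p : ℕ) : ℝ) * log p + log 4 * n := by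
        gcongr with p
        exact hfloor p
    _ ≤ n * log n + log 4 * n := by
        gcongr
        exact sum_primesLE_div_mul_log_le n
    _ = n * (log n + log 4) := by ring

-- Partial summation; keeping the boundary term on the left makes the bound inductive.
lemma sum_div_log_sub_sum_div_log_le {a : ℕ → ℝ} {c : ℝ}
    (ha : ∀ n, 2 ≤ n → ∑ i ∈ Icc 2 n, a i ≤ log n + c) {n : ℕ} (hn : 2 ≤ n) :
    ∑ i ∈ Icc 2 n, a i / log i - (∑ i ∈ Icc 2 n, a i) / log n ≤
      log (log n) - log (log 2) + c * (1 / log 2 - 1 / log n) := by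
  induction n, hn using Nat.le_induction with
  | base => simp
  | succ n hn ih =>
    have hlog : 0 < log n := log_pos (mod_cast hn)
    have hle : log n ≤ log (n + 1 : ℕ) := log_le_log (by positivity) (by simp)
    have hlog' : 0 < log (n + 1 : ℕ) := hlog.trans_le hle
    have hdiff : 0 ≤ 1 / log n - 1 / log (n + 1 : ℕ) :=
      sub_nonneg.2 (one_div_le_one_div_of_le hlog hle)
    have hloglog : log n * (1 / log n - 1 / log (n + 1 : ℕ)) ≤
        log (log (n + 1 : ℕ)) - log (log n) := by
      rw [← log_div hlog'.ne' hlog.ne']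
      refine le_of_eq_of_le ?_ (one_sub_inv_le_log_of_pos (div_pos hlog' hlog))
      field_simp
    calc ∑ i ∈ Icc 2 (n + 1), a i / log i - (∑ i ∈ Icc 2 (n + 1), a i) / log (n + 1 : ℕ)
        = (∑ i ∈ Icc 2 n, a i / log i - (∑ i ∈ Icc 2 n, a i) / log n) +
            (∑ i ∈ Icc 2 n, a i) * (1 / log n - 1 / log (n + 1 : ℕ)) := by
          rw [sum_Icc_succ_top (by lia), sum_Icc_succ_top (by lia)]
          ring
      _ ≤ (log (log n) - log (log 2) + c * (1 / log 2 - 1 / log n)) +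
            (log n + c) * (1 / log n - 1 / log (n + 1 : ℕ)) :=
          add_le_add ih (mul_le_mul_of_nonneg_right (ha n hn) hdiff)
      _ ≤ log (log (n + 1 : ℕ)) - log (log 2) + c * (1 / log 2 - 1 / log (n + 1 : ℕ)) := by
          linarith

lemma sum_div_log_le {a : ℕ → ℝ} {c : ℝ}
    (ha : ∀ n, 2 ≤ n → ∑ i ∈ Icc 2 n, a i ≤ log n + c) {n : ℕ} (hn : 2 ≤ n) :
    ∑ i ∈ Icc 2 n, a i / log i ≤ log (log n) + 1 - log (log 2) + c / log 2 := by
  have hlog : 0 < log n := log_pos (mod_cast hn)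
  have hparts := sum_div_log_sub_sum_div_log_le ha hn
  have hboundary : (∑ i ∈ Icc 2 n, a i) / log n ≤ 1 + c * (1 / log n) := by
    refine (div_le_div_of_nonneg_right (ha n hn) hlog.le).trans_eq ?_
    field_simp
  linarith [mul_sub c (1 / log 2) (1 / log n), mul_one_div c (log 2)]

lemma sum_primesLE_inv_le {n : ℕ} (hn : 2 ≤ n) :
    ∑ p ∈ n.primesLE, (1 / p : ℝ) ≤ log (log n) + 3 - log (log 2) := by
  have hlog4 : log 4 / log 2 = 2 := by
    rw [show (4 : ℝ) = 2 ^ 2 by norm_num, log_pow, Nat.cast_ofNat,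
      mul_div_cancel_right₀ _ (log_pos one_lt_two).ne']
  have hsum := sum_div_log_le (a := fun i ↦ if i.Prime then log i / i else 0) (c := log 4)
    (fun m _ ↦ by
      rw [← sum_filter, ← Nat.primesLE_eq_filter_Icc_two]
      exact sum_primesLE_log_div_le m) hn
  calc ∑ p ∈ n.primesLE, (1 / p : ℝ)
      = ∑ i ∈ Icc 2 n, (if i.Prime then log i / i else 0) / log i := by
        rw [Nat.primesLE_eq_filter_Icc_two, sum_filter]
        refine sum_congr rfl fun i hi ↦ ?_
        have : log i ≠ 0 := (log_pos (mod_cast (mem_Icc.1 hi).1)).ne'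
        split_ifs
        · field_simp
        · simp
    _ ≤ log (log n) + 3 - log (log 2) := by linarith

lemma sum_Icc_inv_sub_one_sub_inv {n : ℕ} (hn : 1 ≤ n) :
    ∑ i ∈ Icc 2 n, (1 / ((i : ℝ) - 1) - 1 / i) = 1 - 1 / n := by
  induction n, hn using Nat.le_induction with
  | base => simp
  | succ n hn ih =>
    rw [sum_Icc_succ_top (by lia), ih]
    push_cast
    ring

/-- The Euler factor `(1 - 1/p)⁻¹ = p / (p - 1)`, which is the local factor at `p` of
`n / φ(n)`; it is defined for every natural number `p`. -/
noncomputable def eulerFactor (p : ℕ) : ℝ := (1 - (p : ℝ)⁻¹)⁻¹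

lemma eulerFactor_eq_one_add {p : ℕ} (hp : 2 ≤ p) : eulerFactor p = 1 + 1 / ((p : ℝ) - 1) := by
  have hp' : (2 : ℝ) ≤ p := mod_cast hp
  have : (p : ℝ) - 1 ≠ 0 := by linarith
  rw [eulerFactor]
  field_simp
  ring

lemma one_le_eulerFactor {p : ℕ} (hp : 2 ≤ p) : 1 ≤ eulerFactor p := by
  have hp' : (2 : ℝ) ≤ p := mod_cast hp
  rw [eulerFactor_eq_one_add hp, le_add_iff_nonneg_right]
  exact one_div_nonneg.2 (by linarith)

lemma eulerFactor_nonneg (p : ℕ) : 0 ≤ eulerFactor p :=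
  inv_nonneg.2 (sub_nonneg.2 p.cast_inv_le_one)

lemma eulerFactor_le_exp_one_div_sub_one {p : ℕ} (hp : 2 ≤ p) :
    eulerFactor p ≤ exp (1 / ((p : ℝ) - 1)) := by
  rw [eulerFactor_eq_one_add hp, add_comm]
  exact add_one_le_exp _

lemma eulerFactor_le_exp_two_div {p : ℕ} (hp : 2 ≤ p) : eulerFactor p ≤ exp (2 / p) := by
  have hp' : (2 : ℝ) ≤ p := mod_cast hp
  refine (eulerFactor_le_exp_one_div_sub_one hp).trans (exp_le_exp.2 ?_)
  rw [div_le_div_iff₀ (by linarith) (by linarith)]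
  linarith

lemma eulerFactor_pow_le {p s : ℕ} (hp : 2 ≤ p) (hs : 2 * s ≤ p) :
    eulerFactor p ^ s ≤ 1 + 4 * s / p := by
  have hsmall : |s * (2 / p : ℝ)| ≤ 1 := by
    rw [abs_of_nonneg (by positivity), mul_div_left_comm, mul_div_assoc']
    exact div_le_one_of_le₀ (mod_cast hs) p.cast_nonneg
  calc eulerFactor p ^ s ≤ exp (2 / p) ^ s :=
        pow_le_pow_left₀ (eulerFactor_nonneg p) (eulerFactor_le_exp_two_div hp) s
    _ = exp (s * (2 / p)) := (exp_nat_mul _ _).symm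
    _ ≤ 1 + 2 * |s * (2 / p : ℝ)| := by
        linarith [le_of_abs_le (abs_exp_sub_one_le hsmall)]
    _ = 1 + 4 * s / p := by
        rw [abs_of_nonneg (by positivity)]
        ring

lemma prod_primesLE_eulerFactor_le {n : ℕ} (hn : 2 ≤ n) :
    ∏ p ∈ n.primesLE, eulerFactor p ≤ exp 4 / log 2 * log n := by
  have hlog2 : 0 < log 2 := log_pos one_lt_two
  have hlog : 0 < log n := log_pos (mod_cast hn)
  have hdiff : ∑ p ∈ n.primesLE, (1 / ((p : ℝ) - 1) - 1 / p) ≤ 1 := by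
    calc ∑ p ∈ n.primesLE, (1 / ((p : ℝ) - 1) - 1 / p)
        ≤ ∑ i ∈ Icc 2 n, (1 / ((i : ℝ) - 1) - 1 / i) := by
          rw [Nat.primesLE_eq_filter_Icc_two]
          refine sum_le_sum_of_subset_of_nonneg (filter_subset _ _) fun i hi _ ↦ ?_
          have : (2 : ℝ) ≤ i := mod_cast (mem_Icc.1 hi).1
          exact sub_nonneg.2 (one_div_le_one_div_of_le (by linarith) (by linarith))
      _ = 1 - 1 / n := sum_Icc_inv_sub_one_sub_inv (by lia)
      _ ≤ 1 := sub_le_self _ (by positivity)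
  rw [sum_sub_distrib] at hdiff
  calc ∏ p ∈ n.primesLE, eulerFactor p
      ≤ ∏ p ∈ n.primesLE, exp (1 / ((p : ℝ) - 1)) :=
        prod_le_prod (fun p _ ↦ eulerFactor_nonneg p) fun p hp ↦
          eulerFactor_le_exp_one_div_sub_one (Nat.two_le_of_mem_primesLE hp)
    _ = exp (∑ p ∈ n.primesLE, 1 / ((p : ℝ) - 1)) := (exp_sum _ _).symm
    _ ≤ exp (4 - log (log 2) + log (log n)) :=
        exp_le_exp.2 (by linarith [sum_primesLE_inv_le hn])
    _ = exp 4 / log 2 * log n := by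
        rw [exp_add, exp_sub, exp_log hlog2, exp_log hlog]

lemma prod_eulerFactor_le_exp {F : Finset ℕ} {Z A : ℝ} (hZ : 0 < Z)
    (hF : ∀ p ∈ F, 2 ≤ p ∧ Z ≤ p) (hcard : (#F : ℝ) ≤ A * Z) :
    ∏ p ∈ F, eulerFactor p ≤ exp (2 * A) := by
  calc ∏ p ∈ F, eulerFactor p ≤ ∏ p ∈ F, exp (2 / Z) :=
        prod_le_prod (fun p _ ↦ eulerFactor_nonneg p) fun p hp ↦
          (eulerFactor_le_exp_two_div (hF p hp).1).trans <|
            exp_le_exp.2 <| div_le_div_of_nonneg_left zero_le_two hZ (hF p hp).2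
    _ = exp (#F * (2 / Z)) := by rw [prod_const, exp_nat_mul]
    _ ≤ exp (2 * A) := by
        rw [exp_le_exp, mul_div_assoc', div_le_iff₀ hZ]
        linarith

/-- The ratio `n / φ(n)`; by the convention `0 / 0 = 0` it vanishes at `n = 0`. -/
noncomputable def totientRatio (n : ℕ) : ℝ := n / n.totient

lemma totientRatio_nonneg (n : ℕ) : 0 ≤ totientRatio n := by
  unfold totientRatio
  positivity

lemma totientRatio_eq_prod_eulerFactor {n : ℕ} (hn : n ≠ 0) :
    totientRatio n = ∏ p ∈ n.primeFactors, eulerFactor p := by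
  have htotient : (n.totient : ℝ) = n * ∏ p ∈ n.primeFactors, (1 - (p : ℝ)⁻¹) := by
    have h := congrArg (fun q : ℚ ↦ (q : ℝ)) n.totient_eq_mul_prod_factors
    push_cast at h
    exact h
  simp only [eulerFactor]
  rw [totientRatio, htotient, prod_inv_distrib, div_mul_cancel_left₀ (Nat.cast_ne_zero.2 hn)]

lemma totientRatio_mul_le (m n : ℕ) :
    totientRatio (m * n) ≤ totientRatio m * totientRatio n := by
  rcases eq_or_ne (m * n) 0 with h | h
  · simpa [h, totientRatio] using mul_nonneg (totientRatio_nonneg m) (totientRatio_nonneg n)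
  obtain ⟨hm, hn⟩ := mul_ne_zero_iff.1 h
  have : 0 < m.totient * n.totient := by positivity
  simp only [totientRatio, div_mul_div_comm, Nat.cast_mul]
  gcongr
  exact_mod_cast Nat.totient_super_multiplicative m n

lemma totientRatio_pow_le {a : ℕ} (ha : a ≠ 0) (j : ℕ) :
    totientRatio (a ^ j) ≤ totientRatio a := by
  have hsub : (a ^ j).primeFactors ⊆ a.primeFactors := fun p hp ↦ by
    rw [Nat.mem_primeFactors] at hp ⊢
    exact ⟨hp.1, hp.1.dvd_of_dvd_pow hp.2.1, ha⟩
  rw [totientRatio_eq_prod_eulerFactor ha, totientRatio_eq_prod_eulerFactor (pow_ne_zero j ha)]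
  exact prod_le_prod_of_subset_of_one_le hsub (fun p _ ↦ eulerFactor_nonneg p)
    fun p hp _ ↦ one_le_eulerFactor (Nat.prime_of_mem_primeFactors hp).two_le

lemma card_primeFactors_mul_log_two_le {n : ℕ} (hn : n ≠ 0) :
    #n.primeFactors * log 2 ≤ log n := by
  have hpow : 2 ^ #n.primeFactors ≤ n :=
    (pow_card_le_prod _ _ _ fun p hp ↦ (Nat.prime_of_mem_primeFactors hp).two_le).trans <|
      Nat.le_of_dvd (Nat.pos_of_ne_zero hn) (Nat.prod_primeFactors_dvd n)
  rw [← log_pow]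
  exact log_le_log (by positivity) (mod_cast hpow)

lemma totientRatio_le_of_card_primeFactors_le {n y Z : ℕ} {A : ℝ} (hn : n ≠ 0) (hy : 2 ≤ y)
    (hcard : (#n.primeFactors : ℝ) ≤ A * (Z + 1)) :
    totientRatio n ≤ exp 4 / log 2 * log y * exp (2 * A) *
      ∏ p ∈ Ioc y Z with p.Prime ∧ p ∣ n, eulerFactor p := by
  have hnonneg (F : Finset ℕ) : 0 ≤ ∏ p ∈ F, eulerFactor p :=
    prod_nonneg fun p _ ↦ eulerFactor_nonneg p
  have hmono {F G : Finset ℕ} (hFG : F ⊆ G) (hG : ∀ p ∈ G, p.Prime) :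
      ∏ p ∈ F, eulerFactor p ≤ ∏ p ∈ G, eulerFactor p :=
    prod_le_prod_of_subset_of_one_le hFG (fun p _ ↦ eulerFactor_nonneg p)
      fun p hp _ ↦ one_le_eulerFactor (hG p hp).two_le
  have hsmall : ∏ p ∈ n.primeFactors with p ≤ y, eulerFactor p ≤ exp 4 / log 2 * log y := by
    refine (hmono (fun p hp ↦ ?_) fun p ↦ Nat.prime_of_mem_primesLE).trans
      (prod_primesLE_eulerFactor_le hy)
    rw [mem_filter] at hp
    exact Nat.mem_primesLE.2 ⟨hp.2, Nat.prime_of_mem_primeFactors hp.1⟩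
  have hmiddle : ∏ p ∈ n.primeFactors with ¬p ≤ y ∧ p ≤ Z, eulerFactor p ≤
      ∏ p ∈ Ioc y Z with p.Prime ∧ p ∣ n, eulerFactor p := by
    refine hmono (fun p hp ↦ ?_) fun p hp ↦ (mem_filter.1 hp).2.1
    rw [mem_filter, Nat.mem_primeFactors] at hp
    exact mem_filter.2 ⟨mem_Ioc.2 ⟨not_le.1 hp.2.1, hp.2.2⟩, hp.1.1, hp.1.2.1⟩
  have hlarge : ∏ p ∈ n.primeFactors with ¬p ≤ y ∧ ¬p ≤ Z, eulerFactor p ≤ exp (2 * A) := by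
    refine prod_eulerFactor_le_exp (Z := Z + 1) (by positivity) (fun p hp ↦ ?_) <|
      (Nat.cast_le.2 (card_filter_le _ _)).trans hcard
    rw [mem_filter] at hp
    exact ⟨(Nat.prime_of_mem_primeFactors hp.1).two_le, mod_cast not_le.1 hp.2.2⟩
  calc totientRatio n
      = (∏ p ∈ n.primeFactors with p ≤ y, eulerFactor p) *
          ((∏ p ∈ n.primeFactors with ¬p ≤ y ∧ p ≤ Z, eulerFactor p) *
            ∏ p ∈ n.primeFactors with ¬p ≤ y ∧ ¬p ≤ Z, eulerFactor p) := by
        rw [totientRatio_eq_prod_eulerFactor hn, ← prod_filter_mul_prod_filter_not _ (· ≤ y),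
          ← prod_filter_mul_prod_filter_not (n.primeFactors.filter fun p ↦ ¬p ≤ y) (· ≤ Z),
          filter_filter, filter_filter]
    _ ≤ exp 4 / log 2 * log y *
          ((∏ p ∈ Ioc y Z with p.Prime ∧ p ∣ n, eulerFactor p) * exp (2 * A)) := by
        have := (hnonneg _).trans hsmall
        have := (hnonneg _).trans hmiddle
        gcongr
        exacts [mul_nonneg (hnonneg _) (hnonneg _), hnonneg _]
    _ = _ := by ring

lemma mul_pow_le_mul_pow_succ_add {c δ w : ℝ} (hc : 0 ≤ c) (hδ : 0 < δ) (hw : 0 ≤ w) (n : ℕ) :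
    c * w ^ n ≤ δ * w ^ (n + 1) + c ^ (n + 1) / δ ^ n := by
  rcases le_total c (δ * w) with h | h
  · calc c * w ^ n ≤ δ * w * w ^ n := by gcongr
      _ = δ * w ^ (n + 1) := by ring
      _ ≤ δ * w ^ (n + 1) + c ^ (n + 1) / δ ^ n := le_add_of_nonneg_right (by positivity)
  · calc c * w ^ n ≤ c * (c / δ) ^ n := by
          gcongr
          rwa [le_div_iff₀' hδ]
      _ = c ^ (n + 1) / δ ^ n := by rw [div_pow, pow_succ', mul_div_assoc]
      _ ≤ δ * w ^ (n + 1) + c ^ (n + 1) / δ ^ n := le_add_of_nonneg_left (by positivity)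

lemma sum_Ioc_inv_sq_le_inv {y : ℕ} (hy : y ≠ 0) (Z : ℕ) :
    ∑ p ∈ Ioc y Z, ((p : ℝ) ^ 2)⁻¹ ≤ (y : ℝ)⁻¹ := by
  rcases le_total y Z with h | h
  · exact (sum_Ioc_inv_sq_le_sub hy h).trans (sub_le_self _ (by positivity))
  · simp [Ioc_eq_empty_of_le h]

lemma sum_Ioc_inv_le_one_add_log (y Z : ℕ) : ∑ p ∈ Ioc y Z, (p : ℝ)⁻¹ ≤ 1 + log Z := by
  have hsub : Ioc y Z ⊆ Icc 1 Z := fun p hp ↦ by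
    rw [mem_Ioc] at hp
    exact mem_Icc.2 ⟨by lia, hp.2⟩
  calc ∑ p ∈ Ioc y Z, (p : ℝ)⁻¹ ≤ ∑ p ∈ Icc 1 Z, (p : ℝ)⁻¹ :=
        sum_le_sum_of_subset_of_nonneg hsub fun _ _ _ ↦ by positivity
    _ = harmonic Z := by simp [harmonic_eq_sum_Icc]
    _ ≤ 1 + log Z := harmonic_le_one_add_log Z

lemma sq_mul_sum_Ioc_pow_eight_inv_le {s : ℕ} {l δ : ℝ} (hs : 1 ≤ s) (hl : 0 ≤ l) (hδ : 0 < δ) :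
    4 * s ^ 2 * ∑ p ∈ Ioc (s ^ 8) ⌊l ^ 2⌋₊, (p : ℝ)⁻¹ ≤ δ * l + 36 ^ 4 / δ ^ 3 := by
  rcases le_or_gt ⌊l ^ 2⌋₊ (s ^ 8) with hZ | hZ
  · rw [Ioc_eq_empty_of_le hZ, sum_empty, mul_zero]
    positivity
  obtain ⟨w, hw, rfl⟩ : ∃ w, 0 ≤ w ∧ w ^ 4 = l :=
    ⟨l ^ (4 : ℝ)⁻¹, by positivity, rpow_inv_natCast_pow hl four_ne_zero⟩
  have hsw : (s : ℝ) ≤ w := by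
    refine le_of_pow_le_pow_left₀ (by norm_num : 8 ≠ 0) hw ?_
    calc (s : ℝ) ^ 8 = (s ^ 8 : ℕ) := (Nat.cast_pow _ _).symm
      _ ≤ ⌊(w ^ 4) ^ 2⌋₊ := mod_cast hZ.le
      _ ≤ (w ^ 4) ^ 2 := Nat.floor_le (by positivity)
      _ = w ^ 8 := (pow_mul _ _ _).symm
  have hw1 : 1 ≤ w := le_trans (mod_cast hs) hsw
  have hsum : ∑ p ∈ Ioc (s ^ 8) ⌊(w ^ 4) ^ 2⌋₊, (p : ℝ)⁻¹ ≤ 9 * w := by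
    have hlog : log ⌊(w ^ 4) ^ 2⌋₊ ≤ 8 * log w := by
      calc log ⌊(w ^ 4) ^ 2⌋₊ ≤ log ((w ^ 4) ^ 2) :=
            log_le_log (Nat.cast_pos.2 (by lia)) (Nat.floor_le (by positivity))
        _ = 8 * log w := by rw [← pow_mul, log_pow]; norm_num
    linarith [sum_Ioc_inv_le_one_add_log (s ^ 8) ⌊(w ^ 4) ^ 2⌋₊, log_le_self hw]
  calc 4 * s ^ 2 * ∑ p ∈ Ioc (s ^ 8) ⌊(w ^ 4) ^ 2⌋₊, (p : ℝ)⁻¹ ≤ 4 * w ^ 2 * (9 * w) := by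
        gcongr
    _ = 36 * w ^ 3 := by ring
    _ ≤ δ * w ^ 4 + 36 ^ 4 / δ ^ 3 := mul_pow_le_mul_pow_succ_add (by norm_num) hδ hw 3

lemma prod_one_add_div_sq_le {T : Finset ℕ} {s k Z : ℕ} (hs : s ≠ 0) (hk : k ≤ s)
    (hT : T ⊆ Ioc (s ^ 8) Z) : ∏ p ∈ T, (1 + k * (4 * s / p) / p : ℝ) ≤ exp 4 := by
  refine (prod_one_add_le_exp_sum T fun p ↦ by positivity).trans (exp_le_exp.2 ?_)
  have hpow : (s : ℝ) ^ 2 ≤ s ^ 8 := mod_cast Nat.pow_le_pow_right (by lia) (by norm_num)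
  calc ∑ p ∈ T, (k * (4 * s / p) / p : ℝ) = 4 * k * s * ∑ p ∈ T, ((p : ℝ) ^ 2)⁻¹ := by
        rw [mul_sum]
        exact sum_congr rfl fun p _ ↦ by ring
    _ ≤ 4 * s * s * ((s ^ 8 : ℕ) : ℝ)⁻¹ := by
        gcongr
        exact (sum_le_sum_of_subset_of_nonneg hT fun _ _ _ ↦ by positivity).trans
          (sum_Ioc_inv_sq_le_inv (pow_ne_zero 8 hs) Z)
    _ ≤ 4 := by
        rw [← div_eq_mul_inv, div_le_iff₀ (by positivity)]
        push_cast
        linarith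

lemma prod_one_add_div_le {T : Finset ℕ} {s k : ℕ} {l δ : ℝ} (hs : 1 ≤ s) (hk : k ≤ s)
    (hl : 0 ≤ l) (hδ : 0 < δ) (hT : T ⊆ Ioc (s ^ 8) ⌊l ^ 2⌋₊) :
    ∏ p ∈ T, (1 + k * (4 * s / p) : ℝ) ≤ exp (36 ^ 4 / δ ^ 3) * exp (δ * l) := by
  refine (prod_one_add_le_exp_sum T fun p ↦ by positivity).trans ?_
  rw [← exp_add, exp_le_exp]
  calc ∑ p ∈ T, (k * (4 * s / p) : ℝ) = 4 * (k * s) * ∑ p ∈ T, (p : ℝ)⁻¹ := by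
        rw [mul_sum]
        exact sum_congr rfl fun p _ ↦ by ring
    _ ≤ 4 * s ^ 2 * ∑ p ∈ Ioc (s ^ 8) ⌊l ^ 2⌋₊, (p : ℝ)⁻¹ := by
        rw [sq]
        gcongr
    _ ≤ 36 ^ 4 / δ ^ 3 + δ * l :=
        (sq_mul_sum_Ioc_pow_eight_inv_le hs hl hδ).trans_eq (add_comm _ _)

lemma prod_eulerFactor_pow_le {F : Finset ℕ} {s : ℕ} (hs : 2 ≤ s)
    (hF : ∀ p ∈ F, s ^ 8 < p) :
    (∏ p ∈ F, eulerFactor p) ^ s ≤ ∏ p ∈ F, (1 + 4 * s / p : ℝ) := by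
  rw [← prod_pow]
  refine prod_le_prod (fun p _ ↦ pow_nonneg (eulerFactor_nonneg p) s) fun p hp ↦ ?_
  have hsp := hF p hp
  have : s * 2 ≤ s * s ^ 7 := Nat.mul_le_mul_left s (hs.trans (Nat.le_self_pow (by lia) s))
  exact eulerFactor_pow_le (by lia) (by lia)

lemma abs_le_of_mem_Icc_floor {m : ℤ} {N : ℝ} (hm : m ∈ Icc (-⌊N⌋) ⌊N⌋) : |(m : ℝ)| ≤ N := by
  rw [mem_Icc] at hm
  rw [abs_le', ← Int.cast_neg, ← Int.le_floor, ← Int.le_floor]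
  exact ⟨hm.2, by lia⟩

lemma card_le_of_pairwise_dvd_sub {X : Finset ℤ} {u v q : ℤ} (huv : u ≤ v) (hq : 0 < q)
    (hX : X ⊆ Icc u v) (hdvd : ∀ x ∈ X, ∀ y ∈ X, q ∣ x - y) :
    (#X : ℝ) ≤ (v - u) / q + 1 := by
  have hq' : (0 : ℝ) < q := mod_cast hq
  have huv' : (u : ℝ) ≤ v := mod_cast huv
  rcases X.eq_empty_or_nonempty with rfl | hne
  · simpa using add_nonneg (div_nonneg (sub_nonneg.2 huv') hq'.le) zero_le_one
  set x₀ := X.min' hne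
  have hx₀ : x₀ ∈ X := X.min'_mem hne
  have hcard : #X ≤ #(Icc 0 ((v - u) / q)) := by
    refine card_le_card_of_injOn (fun x ↦ (x - x₀) / q) (fun x hx ↦ ?_) fun x hx y hy hxy ↦ ?_
    · have := X.min'_le x hx
      have := mem_Icc.1 (hX hx)
      have := mem_Icc.1 (hX hx₀)
      exact mem_Icc.2 ⟨Int.ediv_nonneg (by lia) hq.le, Int.ediv_le_ediv hq (by lia)⟩
    · have := (Int.ediv_left_inj (hdvd x hx x₀ hx₀) (hdvd y hy x₀ hx₀)).1 hxy
      lia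
  have hdiv : (((v - u) / q : ℤ) : ℝ) ≤ (v - u) / q := by
    rw [le_div_iff₀ hq']
    exact_mod_cast Int.ediv_mul_le (v - u) hq.ne'
  have hnonneg : 0 ≤ (v - u) / q := Int.ediv_nonneg (sub_nonneg.2 huv) hq.le
  have hcard' : (#X : ℤ) ≤ (v - u) / q + 1 := by
    rw [Int.card_Icc] at hcard
    lia
  have : (#X : ℝ) ≤ ((v - u) / q : ℤ) + 1 := mod_cast hcard'
  linarith

lemma card_filter_forall_dvd_sub_le {κ : Type*} [Fintype κ] {q : κ → ℕ} (hq : ∀ i, 0 < q i)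
    (hcop : Pairwise fun i j ↦ (q i).Coprime (q j)) (r : κ → ℤ) {u v : ℤ} (huv : u ≤ v) :
    (#{m ∈ Icc u v | ∀ i, (q i : ℤ) ∣ m - r i} : ℝ) ≤ (v - u) / (∏ i, (q i : ℝ)) + 1 := by
  have hpos : 0 < ∏ i, (q i : ℤ) := prod_pos fun i _ ↦ mod_cast hq i
  have hdvd : ∀ x ∈ {m ∈ Icc u v | ∀ i, (q i : ℤ) ∣ m - r i},
      ∀ y ∈ {m ∈ Icc u v | ∀ i, (q i : ℤ) ∣ m - r i}, ∏ i, (q i : ℤ) ∣ x - y := by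
    intro x hx y hy
    refine prod_dvd_of_coprime (fun i _ j _ hij ↦ Nat.isCoprime_iff_coprime.2 (hcop hij))
      fun i _ ↦ ?_
    simpa using dvd_sub ((mem_filter.1 hx).2 i) ((mem_filter.1 hy).2 i)
  simpa using card_le_of_pairwise_dvd_sub huv hpos (filter_subset _ _) hdvd

section AbsProdSub

variable {ι : Type*} [Fintype ι] (b : ι → ℤ)

/-- The natural number `|f(m)|` for the polynomial `f(m) = ∏ i, (m - b i)`. -/
def absProdSub (m : ℤ) : ℕ := (∏ i, (m - b i)).natAbs

variable {b}

lemma absProdSub_ne_zero_iff {m : ℤ} : absProdSub b m ≠ 0 ↔ ∀ i, m ≠ b i := by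
  simp [absProdSub, prod_eq_zero_iff, sub_eq_zero]

lemma prime_dvd_absProdSub_iff {p : ℕ} (hp : p.Prime) {m : ℤ} :
    p ∣ absProdSub b m ↔ ∃ i, (p : ℤ) ∣ m - b i := by
  rw [absProdSub, ← Int.natCast_dvd, (Nat.prime_iff_prime_int.1 hp).dvd_finsetProd_iff]
  simp

lemma cast_absProdSub_le {m : ℤ} {L : ℝ} (hm : |(m : ℝ)| ≤ L) (hb : ∀ i, |(b i : ℝ)| ≤ L) :
    (absProdSub b m : ℝ) ≤ (2 * L) ^ Fintype.card ι := by
  calc (absProdSub b m : ℝ) = ∏ i, |(m : ℝ) - b i| := by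
        rw [absProdSub, Nat.cast_natAbs, abs_prod]
        push_cast
        rfl
    _ ≤ ∏ _i : ι, 2 * L :=
        prod_le_prod (fun _ _ ↦ abs_nonneg _) fun i _ ↦ by
          linarith [abs_sub (m : ℝ) (b i), hb i]
    _ = (2 * L) ^ Fintype.card ι := by simp

lemma card_primeFactors_absProdSub_le {m : ℤ} {L : ℝ} (hL : 0 < L) (hm : |(m : ℝ)| ≤ L)
    (hb : ∀ i, |(b i : ℝ)| ≤ L) (hcard : (Fintype.card ι : ℝ) ≤ log L)
    (hne : ∀ i, m ≠ b i) :
    (#(absProdSub b m).primeFactors : ℝ) ≤ 4 * log L ^ 2 := by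
  have hne' := absProdSub_ne_zero_iff.2 hne
  set k := Fintype.card ι
  have hk : (k : ℝ) * log 2 ≤ log L ^ 2 := by
    have : k ≤ k ^ 2 := Nat.le_self_pow two_ne_zero k
    calc (k : ℝ) * log 2 ≤ k := mul_le_of_le_one_right k.cast_nonneg (by linarith [log_two_lt_d9])
      _ ≤ (k : ℝ) ^ 2 := mod_cast this
      _ ≤ log L ^ 2 := by gcongr
  have hlog : #(absProdSub b m).primeFactors * log 2 ≤ 2 * log L ^ 2 := by
    calc #(absProdSub b m).primeFactors * log 2 ≤ log (absProdSub b m) :=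
          card_primeFactors_mul_log_two_le hne'
      _ ≤ log ((2 * L) ^ k) := log_le_log (by positivity) (cast_absProdSub_le hm hb)
      _ = k * log 2 + k * log L := by rw [log_pow, log_mul two_ne_zero hL.ne', mul_add]
      _ ≤ log L ^ 2 + log L * log L := by
          have : 0 ≤ log L := k.cast_nonneg.trans hcard
          gcongr
      _ = 2 * log L ^ 2 := by ring
  nlinarith [log_two_gt_d9, (#(absProdSub b m).primeFactors).cast_nonneg (α := ℝ)]

lemma card_filter_forall_dvd_absProdSub_le {D : Finset ℕ} (hD : ∀ p ∈ D, p.Prime) {u v : ℤ}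
    (huv : u ≤ v) :
    (#{m ∈ Icc u v | ∀ p ∈ D, p ∣ absProdSub b m} : ℝ) ≤
      (Fintype.card ι : ℝ) ^ #D * ((v - u) / (∏ p ∈ D, (p : ℝ)) + 1) := by
  classical
  have hcover : {m ∈ Icc u v | ∀ p ∈ D, p ∣ absProdSub b m} ⊆
      (univ : Finset (D → ι)).biUnion fun c ↦
        {m ∈ Icc u v | ∀ p : D, ((p : ℕ) : ℤ) ∣ m - b (c p)} := by
    intro m hm
    obtain ⟨hm, hdvd⟩ := mem_filter.1 hm
    choose c hc using fun p : D ↦ (prime_dvd_absProdSub_iff (hD p p.2)).1 (hdvd p p.2)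
    exact mem_biUnion.2 ⟨c, mem_univ c, mem_filter.2 ⟨hm, hc⟩⟩
  have hfibre (c : D → ι) : (#{m ∈ Icc u v | ∀ p : D, ((p : ℕ) : ℤ) ∣ m - b (c p)} : ℝ) ≤
      (v - u) / (∏ p ∈ D, (p : ℝ)) + 1 := by
    rw [← prod_coe_sort D fun p ↦ (p : ℝ)]
    exact card_filter_forall_dvd_sub_le (fun p : D ↦ (hD p p.2).pos) (fun p q hpq ↦
      (Nat.coprime_primes (hD p p.2) (hD q q.2)).2 (Subtype.coe_ne_coe.2 hpq)) (b ∘ c) huv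
  calc (#{m ∈ Icc u v | ∀ p ∈ D, p ∣ absProdSub b m} : ℝ)
      ≤ ∑ c : D → ι, (#{m ∈ Icc u v | ∀ p : D, ((p : ℕ) : ℤ) ∣ m - b (c p)} : ℝ) :=
        mod_cast (card_le_card hcover).trans card_biUnion_le
    _ ≤ ∑ _c : D → ι, ((v - u) / (∏ p ∈ D, (p : ℝ)) + 1) := sum_le_sum fun c _ ↦ hfibre c
    _ = (Fintype.card ι : ℝ) ^ #D * ((v - u) / (∏ p ∈ D, (p : ℝ)) + 1) := by
        rw [sum_const, nsmul_eq_mul, card_univ, Fintype.card_fun, Fintype.card_coe, Nat.cast_pow]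

lemma sum_prod_one_add_le {T : Finset ℕ} (hT : ∀ p ∈ T, p.Prime) {g : ℕ → ℝ} (hg : ∀ p ∈ T, 0 ≤ g p)
    {u v : ℤ} (huv : u ≤ v) :
    ∑ m ∈ Icc u v, ∏ p ∈ T with p ∣ absProdSub b m, (1 + g p) ≤
      (v - u) * ∏ p ∈ T, (1 + Fintype.card ι * g p / p) +
        ∏ p ∈ T, (1 + Fintype.card ι * g p) := by
  have hexpand (m : ℤ) : ∏ p ∈ T with p ∣ absProdSub b m, (1 + g p) =
      ∑ D ∈ T.powerset, if ∀ p ∈ D, p ∣ absProdSub b m then ∏ p ∈ D, g p else 0 := by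
    rw [prod_one_add, ← sum_filter]
    refine sum_congr ?_ fun _ _ ↦ rfl
    ext D
    simp only [mem_powerset, mem_filter, subset_iff]
    exact forall₂_and
  simp only [hexpand]
  rw [sum_comm, prod_one_add, prod_one_add, mul_sum, ← sum_add_distrib]
  refine sum_le_sum fun D hD ↦ ?_
  have hprime : ∀ p ∈ D, p.Prime := fun p hp ↦ hT p (mem_powerset.1 hD hp)
  calc ∑ m ∈ Icc u v, (if ∀ p ∈ D, p ∣ absProdSub b m then ∏ p ∈ D, g p else 0)
      = #{m ∈ Icc u v | ∀ p ∈ D, p ∣ absProdSub b m} * ∏ p ∈ D, g p := by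
        rw [← sum_filter, sum_const, nsmul_eq_mul]
    _ ≤ (Fintype.card ι : ℝ) ^ #D * ((v - u) / (∏ p ∈ D, (p : ℝ)) + 1) * ∏ p ∈ D, g p :=
        mul_le_mul_of_nonneg_right (card_filter_forall_dvd_absProdSub_le hprime huv)
          (prod_nonneg fun p hp ↦ hg p (mem_powerset.1 hD hp))
    _ = _ := by
        rw [prod_div_distrib, prod_mul_distrib, prod_const]
        ring

lemma sum_prod_eulerFactor_pow_le {s : ℕ} {l δ N : ℝ} (hs : 2 ≤ s) (hcard : Fintype.card ι ≤ s)
    (hl : 0 ≤ l) (hδ : 0 < δ) (hN : exp (δ * l) ≤ N) :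
    ∑ m ∈ Icc (-⌊N⌋) ⌊N⌋,
        (∏ p ∈ Ioc (s ^ 8) ⌊l ^ 2⌋₊ with p.Prime ∧ p ∣ absProdSub b m, eulerFactor p) ^ s ≤
      (2 * exp 4 + exp (36 ^ 4 / δ ^ 3)) * N := by
  have hfloor : 0 ≤ ⌊N⌋ := Int.floor_nonneg.2 ((exp_pos _).le.trans hN)
  have hlength : (⌊N⌋ : ℝ) - (-⌊N⌋ : ℤ) ≤ 2 * N := by
    push_cast
    linarith [Int.floor_le N]
  set k := Fintype.card ι
  set T := {p ∈ Ioc (s ^ 8) ⌊l ^ 2⌋₊ | p.Prime}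
  have hT : T ⊆ Ioc (s ^ 8) ⌊l ^ 2⌋₊ := filter_subset _ _
  calc ∑ m ∈ Icc (-⌊N⌋) ⌊N⌋,
        (∏ p ∈ Ioc (s ^ 8) ⌊l ^ 2⌋₊ with p.Prime ∧ p ∣ absProdSub b m, eulerFactor p) ^ s
      ≤ ∑ m ∈ Icc (-⌊N⌋) ⌊N⌋, ∏ p ∈ T with p ∣ absProdSub b m, (1 + 4 * s / p : ℝ) := by
        refine sum_le_sum fun m _ ↦ ?_
        rw [← filter_filter]
        exact prod_eulerFactor_pow_le hs fun p hp ↦ (mem_Ioc.1 (hT (mem_filter.1 hp).1)).1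
    _ ≤ ((⌊N⌋ : ℝ) - (-⌊N⌋ : ℤ)) * ∏ p ∈ T, (1 + k * (4 * s / p) / p : ℝ) +
          ∏ p ∈ T, (1 + k * (4 * s / p) : ℝ) :=
        sum_prod_one_add_le (fun p hp ↦ (mem_filter.1 hp).2) (fun p _ ↦ by positivity) (by lia)
    _ ≤ 2 * N * exp 4 + exp (36 ^ 4 / δ ^ 3) * N := by
        have hmain := prod_one_add_div_sq_le (by lia) hcard hT
        have herror := prod_one_add_div_le (by lia) hcard hl hδ hT
        have : 0 ≤ 2 * N := by linarith [(exp_pos (δ * l)).le]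
        gcongr
        exact herror.trans (by gcongr)
    _ = (2 * exp 4 + exp (36 ^ 4 / δ ^ 3)) * N := by ring

lemma totientRatio_pow_mul_absProdSub_le {a s : ℕ} {m : ℤ} {L : ℝ} (ha : a ≠ 0) (j : ℕ)
    (hs : 2 ≤ s) (hL : 0 < L) (hcard : (Fintype.card ι : ℝ) ≤ log L) (hb : ∀ i, |(b i : ℝ)| ≤ L)
    (hm : |(m : ℝ)| ≤ L) (hne : ∀ i, m ≠ b i) :
    totientRatio (a ^ j * absProdSub b m) ≤
      8 * exp 12 / log 2 * totientRatio a * log s *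
        ∏ p ∈ Ioc (s ^ 8) ⌊log L ^ 2⌋₊ with p.Prime ∧ p ∣ absProdSub b m, eulerFactor p := by
  have homega : (#(absProdSub b m).primeFactors : ℝ) ≤ 4 * (⌊log L ^ 2⌋₊ + 1) :=
    (card_primeFactors_absProdSub_le hL hm hb hcard hne).trans <| by
      gcongr
      exact (Nat.lt_floor_add_one _).le
  calc totientRatio (a ^ j * absProdSub b m)
      ≤ totientRatio (a ^ j) * totientRatio (absProdSub b m) := totientRatio_mul_le _ _
    _ ≤ totientRatio a * (exp 4 / log 2 * log (s ^ 8 : ℕ) * exp (2 * 4) *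
          ∏ p ∈ Ioc (s ^ 8) ⌊log L ^ 2⌋₊ with p.Prime ∧ p ∣ absProdSub b m, eulerFactor p) :=
        mul_le_mul (totientRatio_pow_le ha j)
          (totientRatio_le_of_card_primeFactors_le (absProdSub_ne_zero_iff.2 hne)
            (hs.trans (Nat.le_self_pow (by norm_num) s)) homega)
          (totientRatio_nonneg _) (totientRatio_nonneg _)
    _ = _ := by
        rw [Nat.cast_pow, log_pow, show (12 : ℝ) = 4 + 2 * 4 by norm_num, exp_add]
        push_cast
        ring

end AbsProdSub

theorem sum_totient_ratio_linear_pow_le_log_s_general {δ : ℝ} (hδ : 0 < δ) :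
    ∃ c : ℝ, 0 < c ∧ ∀ (ι : Type*) [Fintype ι] (b : ι → ℤ) (a j s : ℕ) (L η : ℝ) (X : Finset ℤ),
      a ≠ 0 → 2 ≤ s → 0 < L → L ^ (δ - 1) ≤ η → η ≤ 1 → (∀ i, |(b i : ℝ)| ≤ L) →
      (Fintype.card ι : ℝ) ≤ log L → Fintype.card ι ≤ s →
      X ⊆ Icc (-⌊η * L⌋) ⌊η * L⌋ → (∀ m ∈ X, ∀ i, m ≠ b i) →
      ∑ m ∈ X, totientRatio (a ^ j * absProdSub b m) ^ s ≤
        (c * totientRatio a * log s) ^ s * (η * L) := by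
  have hB : 1 ≤ 2 * exp 4 + exp (36 ^ 4 / δ ^ 3) := by
    linarith [one_le_exp (zero_le_four (α := ℝ)), exp_pos (36 ^ 4 / δ ^ 3)]
  set B := 2 * exp 4 + exp (36 ^ 4 / δ ^ 3)
  have : 0 < log 2 := log_pos one_lt_two
  refine ⟨8 * exp 12 / log 2 * B, by positivity,
    fun ι _ b a j s L η X ha hs hL hη hη1 hb hcard hks hX hne ↦ ?_⟩
  set N := η * L
  set A := 8 * exp 12 / log 2 * totientRatio a * log s with hA
  have hA0 : 0 ≤ A := by
    have := totientRatio_nonneg a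
    positivity
  have hexp : exp (δ * log L) ≤ N := by
    calc exp (δ * log L) = L ^ (δ - 1) * L := by
          rw [rpow_sub_one hL.ne', div_mul_cancel₀ _ hL.ne', rpow_def_of_pos hL, mul_comm]
      _ ≤ N := mul_le_mul_of_nonneg_right hη hL.le
  have hN : 0 ≤ N := (exp_pos _).le.trans hexp
  have habs : ∀ m ∈ X, |(m : ℝ)| ≤ L := fun m hm ↦
    (abs_le_of_mem_Icc_floor (hX hm)).trans (mul_le_of_le_one_left hL.le hη1)
  set P : ℤ → ℝ := fun m ↦
    ∏ p ∈ Ioc (s ^ 8) ⌊log L ^ 2⌋₊ with p.Prime ∧ p ∣ absProdSub b m, eulerFactor p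
  have hP (m : ℤ) : 0 ≤ P m := prod_nonneg fun p _ ↦ eulerFactor_nonneg p
  calc ∑ m ∈ X, totientRatio (a ^ j * absProdSub b m) ^ s
      ≤ ∑ m ∈ X, (A * P m) ^ s := sum_le_sum fun m hm ↦
        pow_le_pow_left₀ (totientRatio_nonneg _)
          (totientRatio_pow_mul_absProdSub_le ha j hs hL hcard hb (habs m hm) (hne m hm)) s
    _ ≤ ∑ m ∈ Icc (-⌊N⌋) ⌊N⌋, (A * P m) ^ s :=
        sum_le_sum_of_subset_of_nonneg hX fun m _ _ ↦ pow_nonneg (mul_nonneg hA0 (hP m)) s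
    _ = A ^ s * ∑ m ∈ Icc (-⌊N⌋) ⌊N⌋, P m ^ s := by simp only [mul_pow, mul_sum]
    _ ≤ A ^ s * (B * N) := by
        gcongr
        exact sum_prod_eulerFactor_pow_le hs hks ((Nat.cast_nonneg _).trans hcard) hδ hexp
    _ ≤ A ^ s * (B ^ s * N) := by
        gcongr
        exact le_self_pow₀ hB (by lia)
    _ = (8 * exp 12 / log 2 * B * totientRatio a * log s) ^ s * N := by
        rw [← mul_assoc, ← mul_pow, hA]
        ring

/-- Theorem (Radomskii, Theorem 4, part 2): for distinct integers `b₁, …, b_k`, `a ∈ ℕ`,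
`x ≥ 3`, `(log x)^{-9/10} ≤ η ≤ 1`, `|b_i| ≤ log x`, and `f(b) = (b-b₁)⋯(b-b_k)`:
if `2 ≤ k < log log x` and `s > k`, then
`∑_{|b| ≤ η log x, b ≠ b_i} (a^{k+1}|f(b)|/φ(a^{k+1}|f(b)|))^s ≤ (c (a/φ(a)) log s)^s η log x`. -/
theorem sum_totient_ratio_linear_pow_le_log_s :
    ∃ c : ℝ, 0 < c ∧
      ∀ (k : ℕ) (b : Fin k → ℤ), Function.Injective b →
      ∀ a : ℕ, 0 < a → ∀ s : ℕ, 0 < s →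
      ∀ x : ℝ, 3 ≤ x → ∀ η : ℝ, Real.log x ^ (-(9 : ℝ) / 10) ≤ η → η ≤ 1 →
      (∀ i : Fin k, |(b i : ℝ)| ≤ Real.log x) →
      2 ≤ k → (k : ℝ) < Real.log (Real.log x) → k < s →
      ∑ m ∈ (Finset.Icc (-⌊η * Real.log x⌋) ⌊η * Real.log x⌋).filter
          (fun m : ℤ => ∀ i : Fin k, m ≠ b i),
          (((a ^ (k + 1) * (∏ i : Fin k, (m - b i)).natAbs : ℕ) : ℝ) /
            (Nat.totient (a ^ (k + 1) * (∏ i : Fin k, (m - b i)).natAbs) : ℝ)) ^ s ≤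
        (c * ((a : ℝ) / (Nat.totient a : ℝ)) * Real.log s) ^ s * (η * Real.log x) := by
  obtain ⟨c, hc, h⟩ := sum_totient_ratio_linear_pow_le_log_s_general (δ := 1 / 10) (by norm_num)
  refine ⟨c, hc, fun k b _ a ha s _ x hx η hη hη1 hb hk hkL hks ↦ ?_⟩
  exact h (Fin k) b a (k + 1) s (log x) η _ ha.ne' (by lia) (log_pos (by linarith))
    (by norm_num at hη ⊢; exact hη) hη1 hb (by simpa using hkL.le) (by simpa using hks.le)
    (filter_subset _ _) fun m hm ↦ (mem_filter.1 hm).2
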